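/- Let R be a commutative ring and let m be a positive integer that is invertible in R. If d and e are distinct positive divisors of m, then the images in R[X] of the cyclotomic polynomials Φ_d and Φ_e generate the unit ideal of R[X]; that is, there exist polynomials a, b ∈ R[X] with a·Φ_d + b·Φ_e = 1. -/

import Mathlib

section

open Polynomial

theorem pairwise_isCoprime_of_separable_prod {R ι : Type*} [CommSemiring R] {s : Finset ι}
    {f : ι → R[X]} (hsep : (∏ i ∈ s, f i).Separable) :
    (s : Set ι).Pairwise fun i j ↦ IsCoprime (f i) (f j) := by
  classical
  intro i hi j hj hij
  have hfactor : (f i * ∏ k ∈ s.erase i, f k).Separable := by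
    rwa [Finset.mul_prod_erase s f hi]
  have hdvd : f j ∣ ∏ k ∈ s.erase i, f k :=
    Finset.dvd_prod_of_mem f (Finset.mem_erase.mpr ⟨hij.symm, hj⟩)
  exact hfactor.isCoprime.of_isCoprime_of_dvd_right hdvd

variable {R : Type*} [CommRing R] {m : ℕ}

theorem separable_X_pow_sub_one_of_isUnit (hu : IsUnit (m : R)) :
    (X ^ m - 1 : R[X]).Separable := by
  simpa only [Units.val_one, C_1] using separable_X_pow_sub_C_unit (1 : Rˣ) hu

theorem pairwise_isCoprime_cyclotomic_divisors (hm : 0 < m) (hu : IsUnit (m : R)) :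
    (m.divisors : Set ℕ).Pairwise fun d e ↦ IsCoprime (cyclotomic d R) (cyclotomic e R) := by
  apply pairwise_isCoprime_of_separable_prod
  rw [prod_cyclotomic_eq_X_pow_sub_one hm R]
  exact separable_X_pow_sub_one_of_isUnit hu

end

/-- If `m` is a positive integer invertible in the commutative ring `R`, and `d ≠ e` are
positive divisors of `m`, then the cyclotomic polynomials `Φ_d` and `Φ_e` generate the
unit ideal of `R[X]`. -/
theorem cyclotomic_isCoprime_of_distinct_divisors {R : Type*} [CommRing R]
    (m : ℕ) (hm : 0 < m) (hu : IsUnit (m : R))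
    (d e : ℕ) (hd0 : 0 < d) (he0 : 0 < e) (hd : d ∣ m) (he : e ∣ m) (hde : d ≠ e) :
    ∃ a b : Polynomial R,
      a * Polynomial.cyclotomic d R + b * Polynomial.cyclotomic e R = 1 := by
  have hcop := pairwise_isCoprime_cyclotomic_divisors hm hu
  exact hcop (Nat.mem_divisors.mpr ⟨hd, hm.ne'⟩) (Nat.mem_divisors.mpr ⟨he, hm.ne'⟩) hde
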